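/- Let n ≥ 1 and let f : {0,1}^n → {0,1} be a conservative local rule of width n. Then there exist an integer m ≥ 1, an integer a, and a function g : ℤ^m → ℤ such that for every strictly increasing s : ℤ → ℤ, the function t : ℤ → ℤ defined by t_i = g(s_{i−a}, s_{i+1−a}, …, s_{i+m−1−a}) is strictly increasing, and φ(t) = f_∞(φ(s)). -/

import Mathlib

/-- A local rule `f` of width `n` is `L`-conservative if for every `L`-periodic
bisequence `x : ℤ → Fin 2`, the sum of `f` applied to the `n`-blocks starting at
positions `1,…,L` equals the sum of `x` over positions `1,…,L`. -/
def LCons (n : ℕ) (f : (Fin n → Fin 2) → Fin 2) (L : ℕ) : Prop :=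
  ∀ x : ℤ → Fin 2, (∀ i : ℤ, x (i + L) = x i) →
    (∑ i ∈ Finset.range L, (f (fun k => x ((i : ℤ) + 1 + (k : ℕ)))).val) =
      ∑ i ∈ Finset.range L, (x ((i : ℤ) + 1)).val

/-- For a (strictly increasing) `s : ℤ → ℤ`, `phi s` is the occupancy bisequence:
`phi s i = 1` iff `i` lies in the range of `s`. -/
noncomputable def phi (s : ℤ → ℤ) (i : ℤ) : Fin 2 :=
  haveI := Classical.propDecidable (i ∈ Set.range s)
  if i ∈ Set.range s then 1 else 0

/-- Minus the flux through the left boundary of position `i`. -/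
def QQ (n : ℕ) (f : (Fin n → Fin 2) → Fin 2) (x : ℤ → Fin 2) (i : ℤ) : ℕ :=
  ∑ j ∈ Finset.range n,
    (f (fun k => if j + (k : ℕ) < n then 0 else x (i - n + j + (k : ℕ)))).val

theorem QQ_le (n : ℕ) (f : (Fin n → Fin 2) → Fin 2) (x : ℤ → Fin 2) (i : ℤ) :
    QQ n f x i ≤ n := by
  unfold QQ
  calc _ ≤ ∑ j ∈ Finset.range n, 1 := Finset.sum_le_sum (fun j _ => by omega)
    _ = n := by simp

theorem QQ_congr (n : ℕ) (f : (Fin n → Fin 2) → Fin 2) (x x' : ℤ → Fin 2) (i : ℤ)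
    (h : ∀ p, i ≤ p → p < i + n → x p = x' p) :
    QQ n f x i = QQ n f x' i := by
  unfold QQ
  refine Finset.sum_congr rfl fun j hj => ?_
  have hj' := Finset.mem_range.1 hj
  congr 2
  funext k
  split_ifs with hk
  · rfl
  · have := k.2
    exact h _ (by omega) (by omega)

theorem f_zero (n : ℕ) (f : (Fin n → Fin 2) → Fin 2)
    (hf : ∀ L : ℕ, 0 < L → LCons n f L) : f (fun _ => 0) = 0 := by
  have := hf 1 (by norm_num) (fun _ => 0) (fun _ => rfl)
  simpa using this

/-- conservation for a word `v` preceded by `n` zeros -/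
theorem cons_word (n : ℕ) (hn : 1 ≤ n) (f : (Fin n → Fin 2) → Fin 2)
    (hf : ∀ L : ℕ, 0 < L → LCons n f L) (v : ℕ → Fin 2) :
    (∑ j ∈ Finset.range n,
      (f (fun k => if j + (k : ℕ) < n then 0 else v (j + (k : ℕ) - n))).val) +
    (∑ j ∈ Finset.range n,
      (f (fun k => if j + (k : ℕ) < n then v (j + (k : ℕ)) else 0)).val) =
      ∑ j ∈ Finset.range n, (v j).val := by
  set u : ℤ → Fin 2 := fun r => if r < n then 0 else v (r - n).toNat with hu
  have h := hf (n + n) (by omega) (fun j => u ((j - 1) % ((n + n : ℕ) : ℤ))) (by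
    intro i
    have : i + ((n + n : ℕ) : ℤ) - 1 = (i - 1) + ((n + n : ℕ) : ℤ) := by ring
    simp only [this, Int.add_emod_right])
  rw [Finset.sum_range_add, Finset.sum_range_add] at h
  have e1 : ∀ j ∈ Finset.range n, (f (fun k : Fin n => u (((j : ℤ) + 1 + (k : ℕ) - 1) % ((n + n : ℕ) : ℤ)))).val
      = (f (fun k => if j + (k : ℕ) < n then 0 else v (j + (k : ℕ) - n))).val := by
    intro j hj
    have hj' := Finset.mem_range.1 hj
    congr 2
    funext k
    have := k.2
    rw [Int.emod_eq_of_lt (by omega) (by omega)]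
    simp only [hu]
    split_ifs with h1 h2 h2
    · rfl
    · omega
    · omega
    · congr 1; omega
  have e2 : ∀ j ∈ Finset.range n, (f (fun k : Fin n => u ((((n + j : ℕ) : ℤ) + 1 + (k : ℕ) - 1) % ((n + n : ℕ) : ℤ)))).val
      = (f (fun k => if j + (k : ℕ) < n then v (j + (k : ℕ)) else 0)).val := by
    intro j hj
    have hj' := Finset.mem_range.1 hj
    congr 2
    funext k
    have := k.2
    by_cases h2 : j + (k : ℕ) < n
    · rw [Int.emod_eq_of_lt (by omega) (by omega)]
      simp only [hu, if_pos h2]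
      rw [if_neg (by omega)]
      congr 1; omega
    · have : ((n + j : ℕ) : ℤ) + 1 + (k : ℕ) - 1 = ((j + k : ℕ) - n : ℤ) + ((n + n : ℕ) : ℤ) := by
        push_cast; ring
      rw [this, Int.add_emod_right, Int.emod_eq_of_lt (by omega) (by omega)]
      simp only [hu, if_neg h2]
      rw [if_pos (by omega)]
  have e3 : ∀ j ∈ Finset.range n, (u (((j : ℤ) + 1 - 1) % ((n + n : ℕ) : ℤ))).val = 0 := by
    intro j hj
    have hj' := Finset.mem_range.1 hj
    rw [Int.emod_eq_of_lt (by omega) (by omega)]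
    simp only [hu]
    rw [if_pos (by omega)]; rfl
  have e4 : ∀ j ∈ Finset.range n, (u ((((n + j : ℕ) : ℤ) + 1 - 1) % ((n + n : ℕ) : ℤ))).val
      = (v j).val := by
    intro j hj
    have hj' := Finset.mem_range.1 hj
    rw [Int.emod_eq_of_lt (by omega) (by omega)]
    simp only [hu]
    rw [if_neg (by omega)]
    congr 2; omega
  rw [Finset.sum_congr rfl e1, Finset.sum_congr rfl e2, Finset.sum_congr rfl e3,
    Finset.sum_congr rfl e4] at h
  simpa using h

theorem QQ_succ (n : ℕ) (hn : 1 ≤ n) (f : (Fin n → Fin 2) → Fin 2)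
    (hf : ∀ L : ℕ, 0 < L → LCons n f L) (x : ℤ → Fin 2) (i : ℤ) :
    QQ n f x (i + 1) + (x i).val = QQ n f x i + (f (fun k => x (i + (k : ℕ)))).val := by
  obtain ⟨N, rfl⟩ : ∃ N, n = N + 1 := ⟨n - 1, by omega⟩
  have h1 := cons_word (N + 1) hn f hf (fun j => x (i + j))
  have h2 := cons_word (N + 1) hn f hf (fun j => if j = 0 then 0 else x (i + j))
  have a1 : QQ (N + 1) f x i = ∑ j ∈ Finset.range (N + 1),
      (f (fun k => if j + (k : ℕ) < N + 1 then 0 else x (i + (j + (k : ℕ) - (N + 1) : ℕ)))).val := by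
    unfold QQ
    refine Finset.sum_congr rfl fun j _ => ?_
    congr 2
    funext k
    split_ifs with hk
    · rfl
    · congr 1; omega
  rw [← a1] at h1
  rw [Finset.sum_range_succ' (fun j => Fin.val (f (fun k => if j + (k : ℕ) < N + 1 then x (i + (j + (k : ℕ) : ℕ)) else 0)))] at h1
  rw [Finset.sum_range_succ' (fun j => Fin.val (x (i + (j : ℕ))))] at h1
  rw [Finset.sum_range_succ' (fun j => Fin.val (f (fun k => if j + (k : ℕ) < N + 1 then 0 else
    (if j + (k : ℕ) - (N + 1) = 0 then 0 else x (i + (j + (k : ℕ) - (N + 1) : ℕ))))))] at h2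
  rw [Finset.sum_range_succ' (fun j => Fin.val (f (fun k => if j + (k : ℕ) < N + 1 then
    (if j + (k : ℕ) = 0 then 0 else x (i + (j + (k : ℕ) : ℕ))) else 0)))] at h2
  rw [Finset.sum_range_succ' (fun j => Fin.val (if j = 0 then 0 else x (i + (j : ℕ))))] at h2
  have a2 : QQ (N + 1) f x (i + 1) = ∑ j ∈ Finset.range N,
      (f (fun k => if (j + 1) + (k : ℕ) < N + 1 then 0 else
        (if (j + 1) + (k : ℕ) - (N + 1) = 0 then 0 else
          x (i + ((j + 1) + (k : ℕ) - (N + 1) : ℕ))))).val +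
      (f (fun k => if 0 + (k : ℕ) < N + 1 then
    (if 0 + (k : ℕ) = 0 then 0 else x (i + (0 + (k : ℕ) : ℕ))) else 0)).val := by
    unfold QQ
    rw [Finset.sum_range_succ]
    congr 1
    · refine Finset.sum_congr rfl fun j _ => ?_
      congr 2
      funext k
      split_ifs <;> first | rfl | omega | (congr 1; omega)
    · congr 2
      funext k
      have := k.2
      split_ifs <;> first | rfl | omega | (congr 1; omega)
  have a3 : (f (fun k => if 0 + (k : ℕ) < N + 1 then 0 else
    (if 0 + (k : ℕ) - (N + 1) = 0 then 0 else x (i + (0 + (k : ℕ) - (N + 1) : ℕ))))).val = 0 := by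
    have : (fun k : Fin (N + 1) => if 0 + (k : ℕ) < N + 1 then (0 : Fin 2) else
      (if 0 + (k : ℕ) - (N + 1) = 0 then 0 else x (i + (0 + (k : ℕ) - (N + 1) : ℕ)))) =
      fun _ => 0 := by
      funext k
      have := k.2
      rw [if_pos (by omega)]
    rw [this, f_zero _ f hf]; rfl
  have a4 : (f (fun k => if 0 + (k : ℕ) < N + 1 then x (i + (0 + (k : ℕ) : ℕ)) else 0)).val =
      (f (fun k => x (i + (k : ℕ)))).val := by
    congr 2
    funext k
    have := k.2
    rw [if_pos (by omega)]
    simp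
  have a5 : ∑ j ∈ Finset.range N, (f (fun k => if (j + 1) + (k : ℕ) < N + 1 then
    (if (j + 1) + (k : ℕ) = 0 then 0 else x (i + ((j + 1) + (k : ℕ) : ℕ))) else 0)).val =
    ∑ j ∈ Finset.range N, (f (fun k => if (j + 1) + (k : ℕ) < N + 1 then
      x (i + ((j + 1) + (k : ℕ) : ℕ)) else 0)).val := by
    refine Finset.sum_congr rfl fun j _ => ?_
    congr 2
    funext k
    split_ifs <;> first | rfl | omega
  have a6 : ∑ j ∈ Finset.range N, Fin.val (if j + 1 = 0 then 0 else x (i + ((j + 1 : ℕ) : ℕ))) =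
      ∑ j ∈ Finset.range N, Fin.val (x (i + ((j + 1 : ℕ) : ℕ))) := by
    refine Finset.sum_congr rfl fun j _ => ?_
    rw [if_neg (by omega)]
  rw [a3, a5, a6] at h2
  rw [a4] at h1
  rw [a2]
  simp only [Nat.cast_zero, add_zero, if_true, Fin.val_zero] at h1 h2 ⊢
  omega

theorem phi_eq_one (s : ℤ → ℤ) (i : ℤ) : phi s i = 1 ↔ ∃ k, s k = i := by
  unfold phi
  split_ifs with h
  · simpa using h
  · simpa using h

theorem fin2_ext (a b : Fin 2) (h : a = 1 ↔ b = 1) : a = b := by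
  revert a b; decide

/-- Output particle number `k` sits at position `i`. -/
def PP (n : ℕ) (f : (Fin n → Fin 2) → Fin 2) (s : ℤ → ℤ) (k i : ℤ) : Prop :=
  ∃ h : ℤ, s (h - 1) < i ∧ i ≤ s h ∧ h + (QQ n f (phi s) i : ℤ) = k ∧
    f (fun k => phi s (i + (k : ℕ))) = 1

theorem phi_shift (s : ℤ → ℤ) (c : ℤ) : phi (fun j => s (j + c)) = phi s := by
  funext i
  apply fin2_ext
  rw [phi_eq_one, phi_eq_one]
  constructor
  · rintro ⟨k, hk⟩; exact ⟨_, hk⟩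
  · rintro ⟨k, hk⟩; exact ⟨k - c, by simpa using hk⟩

theorem PP_shift (n : ℕ) (f : (Fin n → Fin 2) → Fin 2) (s : ℤ → ℤ) (c i : ℤ) :
    PP n f (fun j => s (j + c)) 0 i ↔ PP n f s c i := by
  unfold PP
  rw [phi_shift]
  constructor
  · rintro ⟨h, h1, h2, h3, h4⟩
    refine ⟨h + c, ?_, h2, by omega, h4⟩
    rw [show h + c - 1 = h - 1 + c by ring]; exact h1
  · rintro ⟨h, h1, h2, h3, h4⟩
    refine ⟨h - c, ?_, ?_, by omega, h4⟩
    · show s (h - c - 1 + c) < i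
      rw [show h - c - 1 + c = h - 1 by ring]; exact h1
    · show i ≤ s (h - c + c)
      simpa using h2

theorem sm_add (s : ℤ → ℤ) (hs : StrictMono s) (k : ℤ) (d : ℕ) : s k + d ≤ s (k + d) := by
  induction d with
  | zero => simp
  | succ d ih =>
    have : s (k + d) < s (k + (d + 1 : ℕ)) := hs (by push_cast; omega)
    push_cast at *; omega

theorem sm_le (s : ℤ → ℤ) (hs : StrictMono s) (k l : ℤ) (h : k ≤ l) : s k + (l - k) ≤ s l := by
  have := sm_add s hs k (l - k).toNat
  rw [Int.toNat_of_nonneg (by omega)] at this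
  simpa using this

theorem phi_local (n : ℕ) (s s' : ℤ → ℤ) (hs : StrictMono s) (h i : ℤ)
    (h1 : s (h - 1) < i) (h2 : i ≤ s h)
    (hag : ∀ j, h - 1 ≤ j → j ≤ h + n → s j = s' j) (p : ℤ) (hp : i ≤ p) (hp' : p < i + n)
    (hph : phi s p = 1) : phi s' p = 1 := by
  rw [phi_eq_one] at hph ⊢
  obtain ⟨k, rfl⟩ := hph
  have hk : h - 1 < k := hs.lt_iff_lt.1 (by omega)
  have := sm_le s hs h k (by omega)
  exact ⟨k, (hag k (by omega) (by omega)).symm⟩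

theorem PP_local (n : ℕ) (f : (Fin n → Fin 2) → Fin 2) (s s' : ℤ → ℤ)
    (hs : StrictMono s) (hs' : StrictMono s')
    (hag : ∀ j : ℤ, -n - 1 ≤ j → j ≤ n → s j = s' j) (i : ℤ) (hP : PP n f s 0 i) :
    PP n f s' 0 i := by
  obtain ⟨h, h1, h2, h3, h4⟩ := hP
  have hq := QQ_le n f (phi s) i
  have h1' : s' (h - 1) < i := by rw [← hag _ (by omega) (by omega)]; exact h1
  have h2' : i ≤ s' h := by rw [← hag _ (by omega) (by omega)]; exact h2
  have hx : ∀ p, i ≤ p → p < i + n → phi s p = phi s' p := by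
    intro p hp hp'
    apply fin2_ext
    constructor
    · exact phi_local n s s' hs h i h1 h2 (fun j _ _ => hag j (by omega) (by omega)) p hp hp'
    · exact phi_local n s' s hs' h i h1' h2'
        (fun j _ _ => (hag j (by omega) (by omega)).symm) p hp hp'
  refine ⟨h, h1', h2', ?_, ?_⟩
  · rw [← QQ_congr n f _ _ i hx]; exact h3
  · rw [← h4]
    congr 1
    funext k
    have := k.2
    exact (hx _ (by omega) (by omega)).symm

theorem exists_H (s : ℤ → ℤ) (hs : StrictMono s) (i : ℤ) : ∃ h, s (h - 1) < i ∧ i ≤ s h := by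
  obtain ⟨h, hh, hmin⟩ := Int.exists_least_of_bdd (P := fun k => i ≤ s k)
    ⟨min 0 (i - s 0), fun z hz => by
      by_contra hc
      have := sm_le s hs z 0 (by omega)
      omega⟩
    ⟨max 0 (i - s 0), by
      have := sm_le s hs 0 (max 0 (i - s 0)) (by omega)
      omega⟩
  refine ⟨h, ?_, hh⟩
  by_contra hc
  have := hmin (h - 1) (by omega)
  omega

/-- The integrated output height function. -/
theorem exists_G (n : ℕ) (hn : 1 ≤ n) (f : (Fin n → Fin 2) → Fin 2)
    (hf : ∀ L : ℕ, 0 < L → LCons n f L) (s : ℤ → ℤ) (hs : StrictMono s) :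
    ∃ G : ℤ → ℤ, (∀ i, G (i + 1) = G i + (f (fun k => phi s (i + (k : ℕ)))).val) ∧
      (∀ k, k ≤ G (s k) ∧ G (s k) ≤ k + n) ∧
      (∀ k i, PP n f s k i ↔ G i = k ∧ f (fun k => phi s (i + (k : ℕ))) = 1) := by
  choose H hH1 hH2 using exists_H s hs
  have huniq : ∀ i h, s (h - 1) < i → i ≤ s h → h = H i := by
    intro i h h1 h2
    have a : h - 1 < H i := hs.lt_iff_lt.1 (h1.trans_le (hH2 i))
    have b : H i - 1 < h := hs.lt_iff_lt.1 ((hH1 i).trans_le h2)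
    omega
  refine ⟨fun i => H i + QQ n f (phi s) i, ?_, ?_, ?_⟩
  · intro i
    have hq := QQ_succ n hn f hf (phi s) i
    have : H (i + 1) = H i + (phi s i).val := by
      symm
      by_cases hp : phi s i = 1
      · rw [hp]
        obtain ⟨k, hk⟩ := (phi_eq_one s i).1 hp
        have hkk : k = H i := huniq i k (by rw [← hk]; exact hs (by omega)) hk.ge
        have := hs (show H i < H i + 1 by omega)
        subst hkk
        apply huniq
        · simp; omega
        · simp; omega
      · have h0 : phi s i = 0 := by
          revert hp; generalize phi s i = z; revert z; decide
        rw [h0]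
        have hne : s (H i) ≠ i := fun h => hp ((phi_eq_one s i).2 ⟨_, h⟩)
        have := hH1 i
        have := hH2 i
        apply huniq
        · simp; omega
        · simp; omega
    simp only [this]
    omega
  · intro k
    have : k = H (s k) := huniq _ _ (hs (by omega)) le_rfl
    have hq := QQ_le n f (phi s) (s k)
    simp only [← this]
    omega
  · intro k i
    constructor
    · rintro ⟨h, h1, h2, h3, h4⟩
      have := huniq i h h1 h2
      subst this
      exact ⟨h3, h4⟩
    · rintro ⟨h3, h4⟩
      exact ⟨H i, hH1 i, hH2 i, h3, h4⟩

theorem G_mono (G : ℤ → ℤ) (hG : ∀ i, G i ≤ G (i + 1)) : Monotone G :=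
  monotone_int_of_le_succ hG

theorem PP_main (n : ℕ) (hn : 1 ≤ n) (f : (Fin n → Fin 2) → Fin 2)
    (hf : ∀ L : ℕ, 0 < L → LCons n f L) (s : ℤ → ℤ) (hs : StrictMono s) :
    (∀ k, ∃ i, PP n f s k i) ∧
    (∀ t : ℤ → ℤ, (∀ k, PP n f s k (t k)) →
      StrictMono t ∧ ∀ i, phi t i = f (fun k => phi s (i + (k : ℕ)))) := by
  obtain ⟨G, hG1, hG2, hG3⟩ := exists_G n hn f hf s hs
  have hmono : Monotone G := G_mono G (fun i => by rw [hG1]; omega)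
  constructor
  · intro k
    obtain ⟨i, hi, hmax⟩ := Int.exists_greatest_of_bdd (P := fun i => G i ≤ k)
      ⟨s (k + 1), fun z hz => by
        by_contra hc
        have := hmono (show s (k + 1) ≤ z by omega)
        have := (hG2 (k + 1)).1
        omega⟩
      ⟨s (k - n), by have := (hG2 (k - n)).2; omega⟩
    have h1 : ¬ G (i + 1) ≤ k := fun h => by have := hmax _ h; omega
    rw [hG1] at h1
    refine ⟨i, (hG3 k i).2 ⟨by omega, ?_⟩⟩
    apply Fin.ext
    show _ = 1
    omega
  · intro t ht
    have ht' := fun k => (hG3 k (t k)).1 (ht k)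
    refine ⟨strictMono_int_of_lt_succ fun k => ?_, fun i => ?_⟩
    · by_contra hc
      have := hmono (show t (k + 1) ≤ t k by omega)
      rw [(ht' k).1, (ht' (k + 1)).1] at this
      omega
    · apply fin2_ext
      rw [phi_eq_one]
      constructor
      · rintro ⟨k, rfl⟩
        exact (ht' k).2
      · intro hi
        refine ⟨G i, ?_⟩
        have e1 := hG1 i
        have e2 := hG1 (t (G i))
        rw [hi] at e1
        rw [(ht' (G i)).2, (ht' (G i)).1] at e2
        have e3 := (ht' (G i)).1
        simp only [Fin.val_one, Nat.cast_one] at e1 e2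
        rcases lt_trichotomy (t (G i)) i with h | h | h
        · have := hmono (show t (G i) + 1 ≤ i by omega)
          omega
        · exact h
        · have := hmono (show i + 1 ≤ t (G i) by omega)
          omega

theorem stmt_9 (n : ℕ) (hn : 1 ≤ n) (f : (Fin n → Fin 2) → Fin 2)
    (hf : ∀ L : ℕ, 0 < L → LCons n f L) :
    ∃ m : ℕ, 1 ≤ m ∧ ∃ a : ℤ, ∃ g : (Fin m → ℤ) → ℤ,
      ∀ s : ℤ → ℤ, StrictMono s →
        StrictMono (fun i : ℤ => g (fun k => s (i - a + (k : ℕ)))) ∧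
        ∀ i : ℤ,
          phi (fun i : ℤ => g (fun k => s (i - a + (k : ℕ)))) i =
            f (fun k => phi s (i + (k : ℕ))) := by
  refine ⟨2 * n + 2, by omega, n + 1, fun w => Classical.epsilon fun i =>
    ∃ s' : ℤ → ℤ, StrictMono s' ∧
      (∀ j : Fin (2 * n + 2), s' ((j : ℕ) - (n + 1)) = w j) ∧ PP n f s' 0 i, ?_⟩
  intro s hs
  apply (PP_main n hn f hf s hs).2
  intro k
  have hsk : StrictMono (fun j => s (j + k)) := fun a b hab => hs (by omega)
  have hex : ∃ i, ∃ s' : ℤ → ℤ, StrictMono s' ∧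
      (∀ j : Fin (2 * n + 2), s' ((j : ℕ) - (n + 1)) = s (k - (n + 1) + (j : ℕ))) ∧
      PP n f s' 0 i := by
    obtain ⟨i, hi⟩ := (PP_main n hn f hf s hs).1 k
    refine ⟨i, fun j => s (j + k), hsk, fun j => ?_, (PP_shift n f s k i).2 hi⟩
    show s _ = s _
    congr 1; ring
  obtain ⟨s', hs', hag, hP⟩ := Classical.epsilon_spec hex
  rw [← PP_shift]
  refine PP_local n f s' _ hs' hsk (fun j hj1 hj2 => ?_) _ hP
  have := hag ⟨(j + (n + 1)).toNat, by omega⟩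
  simp only at this
  rw [Int.toNat_of_nonneg (by omega)] at this
  rw [show j + (n + 1 : ℤ) - (n + 1) = j by ring] at this
  rw [this]
  congr 1; ring
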